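/- Let n ≥ 2 and let f, g : 𝕋 → ℂ be continuous functions on 𝕋 = AddCircle (2π). Let a_I ≤ b_I and a_J ≤ b_J be real numbers with (b_I − a_I) + (b_J − a_J) < 2π/n, and set I = π_*([a_I, b_I]), J = π_*([a_J, b_J]). Assume supp f ⊆ R_n(I) with no strictly smaller closed subinterval I' = π_*([a', b']) (a_I ≤ a', b' ≤ b_I, (a', b') ≠ (a_I, b_I)) satisfying supp f ⊆ R_n(I'), and analogously for g with J. Let a_K, b_K be reals with a_I + a_J ≤ a_K ≤ b_K ≤ b_I + b_J and supp (f ⋆ g) ⊆ R_n(π_*([a_K, b_K])), and set ρ = b_I + b_J − b_K. If ρ > 0, then there exist α, β ∈ ℂ with α^n = β^n = 1 and α ≠ β such that: (i) F_α = ∑_{k=0}^{n−1} α^k S_{2πk/n} f vanishes on π_*((b_I − ρ, a_I + 2π/n)); (ii) G_α = ∑_{k=0}^{n−1} α^k S_{2πk/n} g vanishes on π_*((b_J, a_J + 2π/n)) and π_*(b_J) ∈ supp G_α; (iii) F_β = ∑_{k=0}^{n−1} β^k S_{2πk/n} f vanishes on π_*((b_I, a_I + 2π/n)) and π_*(b_I)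 ∈ supp F_β; (iv) G_β = ∑_{k=0}^{n−1} β^k S_{2πk/n} g vanishes on π_*((b_J − ρ, a_J + 2π/n)). -/

import Mathlib

open MeasureTheory Real Set Pointwise

noncomputable section

abbrev 𝕋 : Type := AddCircle (2 * π)

instance : Fact (0 < 2 * π) := ⟨by positivity⟩

/-- Natural projection `ℝ → 𝕋`. -/
def proj : ℝ → 𝕋 := fun r => (r : 𝕋)

/-- Convolution of functions on the circle with respect to Haar (Lebesgue) measure. -/
def circConv (f g : 𝕋 → ℂ) : 𝕋 → ℂ := fun x => ∫ t : 𝕋, f t * g (x - t)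

/-- Shift operator `(S_y f)(x) = f (x - y)`. -/
def shift (y : 𝕋) (f : 𝕋 → ℂ) : 𝕋 → ℂ := fun x => f (x - y)

/-- `Rn n A = ⋃_{k=0}^{n-1} (π_*(2πk/n) + A)`. -/
def Rn (n : ℕ) (A : Set 𝕋) : Set 𝕋 :=
  ⋃ k ∈ Finset.range n, (proj (2 * π * k / n) +ᵥ A)


/-- Two-sided Laplace transform. -/
def Lap (q : ℝ → ℂ) (z : ℂ) : ℂ := ∫ t : ℝ, Complex.exp (z * t) * q t

lemma Lap_norm_le (q : ℝ → ℂ) (hq : Integrable q) (z : ℂ) (B : ℝ)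
    (h : ∀ t, q t ≠ 0 → z.re * t ≤ B) : ‖Lap q z‖ ≤ Real.exp B * ∫ t, ‖q t‖ := by
  unfold Lap
  rw [← integral_const_mul]
  refine norm_integral_le_of_norm_le (hq.norm.const_mul _) (ae_of_all _ fun t => ?_)
  rw [norm_mul, Complex.norm_exp]
  by_cases h0 : q t = 0
  · simp [h0]
  · gcongr
    simpa using h t h0

lemma Lap_integrable (q : ℝ → ℂ) (hq : Integrable q) (R : ℝ) (hR : ∀ t, R < |t| → q t = 0)
    (z : ℂ) : Integrable (fun t : ℝ => Complex.exp (z * t) * q t) := by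
  refine Integrable.mono' (hq.norm.const_mul (Real.exp (‖z‖ * R))) ?_ (ae_of_all _ fun t => ?_)
  · exact (Continuous.aestronglyMeasurable (by fun_prop)).mul hq.aestronglyMeasurable
  · rw [norm_mul, Complex.norm_exp]
    by_cases h0 : q t = 0
    · simp [h0]
    · have ht : |t| ≤ R := by by_contra h; exact h0 (hR t (not_le.1 h))
      gcongr
      have : (z * t).re = z.re * t := by simp
      rw [this]
      calc z.re * t ≤ |z.re * t| := le_abs_self _
        _ = |z.re| * |t| := abs_mul _ _
        _ ≤ ‖z‖ * R := by
          gcongr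
          exact Complex.abs_re_le_norm z

lemma Lap_diff (q : ℝ → ℂ) (hq : Integrable q) (R : ℝ) (hR : ∀ t, R < |t| → q t = 0) :
    Differentiable ℂ (Lap q) := by
  intro z₀
  have hb : Integrable (fun t => Real.exp ((‖z₀‖ + 1) * R) * R * ‖q t‖) := hq.norm.const_mul _
  have key := hasDerivAt_integral_of_dominated_loc_of_deriv_le (μ := volume)
    (F := fun (z : ℂ) (t : ℝ) => Complex.exp (z * t) * q t)
    (F' := fun (z : ℂ) (t : ℝ) => Complex.exp (z * t) * t * q t)
    (x₀ := z₀) (s := Metric.ball z₀ 1) (bound := fun t => Real.exp ((‖z₀‖ + 1) * R) * R * ‖q t‖)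
    (Metric.ball_mem_nhds _ one_pos)
    (Filter.Eventually.of_forall fun z => (Lap_integrable q hq R hR z).aestronglyMeasurable)
    (Lap_integrable q hq R hR z₀)
    ((Continuous.aestronglyMeasurable (by fun_prop)).mul hq.aestronglyMeasurable)
    (ae_of_all _ fun t z hz => ?_) hb (ae_of_all _ fun t z hz => ?_)
  · exact key.2.differentiableAt
  · rw [norm_mul, norm_mul, Complex.norm_exp]
    by_cases h0 : q t = 0
    · simp [h0]
    · have ht : |t| ≤ R := by by_contra h; exact h0 (hR t (not_le.1 h))
      have hz' : ‖z‖ ≤ ‖z₀‖ + 1 := by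
        have := norm_sub_norm_le z z₀
        rw [Metric.mem_ball, dist_eq_norm] at hz
        linarith
      have h1 : (z * t).re ≤ (‖z₀‖ + 1) * R := by
        have : (z * t).re = z.re * t := by simp
        rw [this]
        calc z.re * t ≤ |z.re * t| := le_abs_self _
          _ = |z.re| * |t| := abs_mul _ _
          _ ≤ (‖z₀‖ + 1) * R := by
            gcongr
            exact (Complex.abs_re_le_norm z).trans hz'
      have h2 : ‖(t : ℂ)‖ ≤ R := by simpa using ht
      gcongr
  · have h1 : HasDerivAt (fun z : ℂ => z * (t : ℂ)) (t : ℂ) z := by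
      simpa using (hasDerivAt_id z).mul_const (t : ℂ)
    exact (h1.cexp).mul_const _

/-- `q` vanishes to the right of `c`. -/
def VR (c : ℝ) (q : ℝ → ℂ) : Prop := ∀ t, c < t → q t = 0

/-- exponential bound on the positive half line. -/
def NB (c : ℝ) (F : ℝ → ℂ) : Prop := ∃ M : ℝ, ∀ x : ℝ, 0 ≤ x → ‖F x‖ ≤ M * Real.exp (c * x)

lemma NB_of_VR {c : ℝ} {q : ℝ → ℂ} (hq : Integrable q) (h : VR c q) :
    NB c (fun x => Lap q x) := by
  refine ⟨∫ t, ‖q t‖, fun x hx => ?_⟩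
  rw [mul_comm]
  refine Lap_norm_le q hq x (c * x) fun t ht => ?_
  have : t ≤ c := by by_contra h'; exact ht (h t (not_le.1 h'))
  simp only [Complex.ofReal_re]
  nlinarith

open Bornology Filter Topology in
lemma VR_of_NB {c R : ℝ} {q : ℝ → ℂ} (hqc : Continuous q) (hq : Integrable q)
    (hR : ∀ t, R < |t| → q t = 0) (h : NB c (fun x => Lap q x)) : VR c q := by
  obtain ⟨M, hM⟩ := h
  set q1 : ℝ → ℂ := (Iic c).indicator q with hq1
  set q2 : ℝ → ℂ := (Ioi c).indicator q with hq2
  have i1 : Integrable q1 := hq.indicator measurableSet_Iic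
  have i2 : Integrable q2 := hq.indicator measurableSet_Ioi
  have R1 : ∀ t, R < |t| → q1 t = 0 := fun t ht => by simp [hq1, indicator, hR t ht]
  have R2 : ∀ t, R < |t| → q2 t = 0 := fun t ht => by simp [hq2, indicator, hR t ht]
  have hsum : ∀ z, Lap q z = Lap q1 z + Lap q2 z := by
    intro z
    unfold Lap
    rw [← integral_add (Lap_integrable q1 i1 R R1 z) (Lap_integrable q2 i2 R R2 z)]
    congr 1
    ext t
    rw [← mul_add]
    congr 1
    by_cases ht : t ≤ c
    · simp [hq1, hq2, indicator, ht]
    · simp [hq1, hq2, indicator, ht, not_le.1 ht]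
  set E : ℂ → ℂ := fun z => Complex.exp (-c * z) * Lap q2 z with hE
  have hEd : Differentiable ℂ E := by
    have := Lap_diff q2 i2 R R2
    simp only [hE]
    fun_prop
  set N1 := ∫ t, ‖q1 t‖ with hN1
  set N2 := ∫ t, ‖q2 t‖ with hN2
  have N1p : 0 ≤ N1 := integral_nonneg fun _ => norm_nonneg _
  have N2p : 0 ≤ N2 := integral_nonneg fun _ => norm_nonneg _
  have hnE : ∀ z, ‖E z‖ = Real.exp (-c * z.re) * ‖Lap q2 z‖ := by
    intro z; simp [hE, Complex.norm_exp]
  have hleft : ∀ z : ℂ, z.re ≤ 0 → ‖E z‖ ≤ N2 := by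
    intro z hz
    have := Lap_norm_le q2 i2 z (c * z.re) (fun t ht => by
      have : c < t := by
        by_contra h'
        exact ht (by simp [hq2, indicator, h'])
      nlinarith)
    rw [hnE]
    calc _ ≤ Real.exp (-c * z.re) * (Real.exp (c * z.re) * N2) := by gcongr
      _ = N2 := by rw [← mul_assoc, ← Real.exp_add]; simp
  have hpos : ∀ x : ℝ, 0 ≤ x → ‖E x‖ ≤ |M| + N1 + N2 := by
    intro x hx
    have h1 := NB_of_VR (c := c) i1 (fun t ht => by simp [hq1, indicator, ht])
    have h1 : ‖Lap q1 x‖ ≤ Real.exp (c * x) * N1 := by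
      refine Lap_norm_le q1 i1 x (c * x) fun t ht => ?_
      have : t ≤ c := by by_contra h'; exact ht (by simp [hq1, indicator, h'])
      simp only [Complex.ofReal_re]
      nlinarith
    have h2 := hM x hx
    simp only at h2
    have h3 : Lap q2 x = Lap q x - Lap q1 x := by rw [hsum]; ring
    have h4 : ‖Lap q2 x‖ ≤ Real.exp (c * x) * (|M| + N1) := by
      rw [h3]
      refine (norm_sub_le _ _).trans ?_
      have : M * Real.exp (c * x) ≤ |M| * Real.exp (c * x) := by
        gcongr; exact le_abs_self M
      nlinarith
    rw [hnE]
    calc _ ≤ Real.exp (-c * (x : ℂ).re) * (Real.exp (c * x) * (|M| + N1)) := by gcongr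
      _ = |M| + N1 := by
        rw [← mul_assoc, ← Real.exp_add]; simp
      _ ≤ _ := by linarith
  have hgrow : ∀ l : Filter ℂ, E =O[l] fun z => Real.exp ((|c| + |R|) * ‖z‖ ^ (1 : ℝ)) := by
    intro l
    refine Asymptotics.IsBigO.of_bound N2 (Eventually.of_forall fun z => ?_)
    rw [Real.norm_of_nonneg (Real.exp_pos _).le, hnE, Real.rpow_one]
    have := Lap_norm_le q2 i2 z (|R| * ‖z‖) (fun t ht => by
      have : |t| ≤ |R| := by
        by_contra h'
        exact ht (R2 t ((le_abs_self R).trans_lt (not_le.1 h')))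
      calc z.re * t ≤ |z.re * t| := le_abs_self _
        _ = |t| * |z.re| := by rw [abs_mul, mul_comm]
        _ ≤ |R| * ‖z‖ := by
          gcongr
          exact Complex.abs_re_le_norm z)
    have h2 : -c * z.re ≤ |c| * ‖z‖ := by
      calc -c * z.re ≤ |-c * z.re| := le_abs_self _
        _ = |c| * |z.re| := by rw [abs_mul, abs_neg]
        _ ≤ _ := by
          gcongr
          exact Complex.abs_re_le_norm z
    calc _ ≤ Real.exp (|c| * ‖z‖) * (Real.exp (|R| * ‖z‖) * N2) := by gcongr
      _ = N2 * Real.exp ((|c| + |R|) * ‖z‖) := by rw [add_mul, Real.exp_add]; ring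
  have hbd : ∀ z, ‖E z‖ ≤ |M| + N1 + N2 := by
    intro z
    have hM0 := abs_nonneg M
    have him : ∀ x : ℝ, ‖E (x * Complex.I)‖ ≤ |M| + N1 + N2 := fun x =>
      (hleft _ (by simp)).trans (by linarith)
    rcases le_total z.re 0 with hz | hz
    · exact (hleft z hz).trans (by linarith)
    · rcases le_total 0 z.im with hi | hi
      · exact PhragmenLindelof.quadrant_I hEd.diffContOnCl ⟨1, by norm_num, |c| + |R|, hgrow _⟩
          hpos (fun x _ => him x) hz hi
      · exact PhragmenLindelof.quadrant_IV hEd.diffContOnCl ⟨1, by norm_num, |c| + |R|, hgrow _⟩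
          hpos (fun x _ => him x) hz hi
  have hconst : ∀ z w, E z = E w := by
    refine hEd.apply_eq_apply_of_bounded ?_
    refine (isBounded_iff_forall_norm_le).2 ⟨|M| + N1 + N2, ?_⟩
    rintro _ ⟨z, rfl⟩
    exact hbd z
  have hF : ∀ w : ℝ, FourierTransform.fourier q2 w = Lap q2 ((-2 * π * w : ℝ) * Complex.I) := by
    intro w
    rw [Real.fourier_real_eq_integral_exp_smul]
    unfold Lap
    congr 1
    ext t
    simp only [smul_eq_mul]
    congr 2
    push_cast
    ring
  have hFn : ∀ w : ℝ, ‖FourierTransform.fourier q2 w‖ = ‖E 0‖ := by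
    intro w
    rw [hF, ← hconst ((-2 * π * w : ℝ) * Complex.I) 0, hnE]
    simp
  have hE0 : ‖E 0‖ = 0 := by
    have h1 := (Real.zero_at_infty_fourier q2).norm
    simp_rw [hFn, norm_zero] at h1
    exact tendsto_nhds_unique tendsto_const_nhds h1
  have hFz : FourierTransform.fourier q2 = 0 := by
    ext w
    rw [Pi.zero_apply, ← norm_eq_zero, hFn, hE0]
  intro t ht
  have hq2t : ContinuousAt q2 t := by
    refine hqc.continuousAt.congr ?_
    filter_upwards [Ioi_mem_nhds ht] with s hs
    simp [hq2, indicator, mem_Ioi.1 hs]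
  have := i2.fourierInv_fourier_eq (by rw [hFz]; exact integrable_zero _ _ _) hq2t
  rw [hFz] at this
  have h0 : q2 t = q t := by simp [hq2, indicator, ht]
  rw [← h0, ← this, Real.fourierInv_eq]
  simp

/-- continuous with compact support -/
def CC (q : ℝ → ℂ) : Prop := Continuous q ∧ HasCompactSupport q

lemma CC.int {q : ℝ → ℂ} (h : CC q) : Integrable q := h.1.integrable_of_hasCompactSupport h.2

lemma CC.bound {q : ℝ → ℂ} (h : CC q) : ∃ R, 0 ≤ R ∧ ∀ t, R < |t| → q t = 0 := by
  obtain ⟨R, hR⟩ := h.2.isCompact.isBounded.exists_norm_le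
  refine ⟨max R 0, le_max_right _ _, fun t ht => ?_⟩
  by_contra h0
  have := hR t (subset_tsupport _ h0)
  rw [Real.norm_eq_abs] at this
  exact absurd ((le_max_left R 0).trans_lt ht) (not_lt.2 this)

lemma VR_iff_NB {c : ℝ} {q : ℝ → ℂ} (h : CC q) : VR c q ↔ NB c (fun x => Lap q x) := by
  obtain ⟨R, _, hR⟩ := h.bound
  exact ⟨NB_of_VR h.int, VR_of_NB h.1 h.int hR⟩

/-- convolution on the line -/
def cv (φ ψ : ℝ → ℂ) : ℝ → ℂ := fun x => ∫ t : ℝ, φ t * ψ (x - t)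

lemma cv_eq (φ ψ : ℝ → ℂ) : cv φ ψ = convolution φ ψ (ContinuousLinearMap.mul ℂ ℂ) volume := rfl

lemma CC.cv {φ ψ : ℝ → ℂ} (h1 : CC φ) (h2 : CC ψ) : CC (cv φ ψ) := by
  rw [cv_eq]
  exact ⟨h2.2.continuous_convolution_right _ h1.1.locallyIntegrable h2.1, h1.2.convolution _ h2.2⟩

lemma cv_int {φ ψ : ℝ → ℂ} (h1 : CC φ) (h2 : CC ψ) (x : ℝ) :
    Integrable (fun t => φ t * ψ (x - t)) := by
  have h3 := h1.1
  have h4 := h2.1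
  refine Continuous.integrable_of_hasCompactSupport (by fun_prop) ?_
  exact h1.2.mul_right

/-- multiplication by the variable -/
def Dm (k : ℕ) (φ : ℝ → ℂ) : ℝ → ℂ := fun t => (t : ℂ) ^ k * φ t

lemma CC.Dm {φ : ℝ → ℂ} (h : CC φ) (k : ℕ) : CC (Dm k φ) := by
  have := h.1
  refine ⟨by unfold _root_.Dm; fun_prop, ?_⟩
  exact h.2.mul_left

lemma Dm_Dm (j k : ℕ) (φ : ℝ → ℂ) : Dm j (Dm k φ) = Dm (k + j) φ := by
  ext t; simp only [Dm]; ring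

lemma Dm_cv {φ ψ : ℝ → ℂ} (h1 : CC φ) (h2 : CC ψ) :
    Dm 1 (cv φ ψ) = fun x => cv (Dm 1 φ) ψ x + cv φ (Dm 1 ψ) x := by
  ext x
  unfold cv
  rw [← integral_add (cv_int (h1.Dm 1) h2 x) (cv_int h1 (h2.Dm 1) x)]
  simp only [Dm]
  rw [← integral_const_mul]
  congr 1
  ext t
  push_cast
  ring

lemma Lap_cv {φ ψ : ℝ → ℂ} (h1 : CC φ) (h2 : CC ψ) (z : ℂ) :
    Lap (cv φ ψ) z = Lap φ z * Lap ψ z := by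
  obtain ⟨R1, _, hR1⟩ := h1.bound
  obtain ⟨R2, _, hR2⟩ := h2.bound
  have := integral_convolution (μ := volume) (ν := volume) (ContinuousLinearMap.mul ℂ ℂ)
    (Lap_integrable φ h1.int R1 hR1 z) (Lap_integrable ψ h2.int R2 hR2 z)
  simp only [ContinuousLinearMap.mul_apply'] at this
  unfold Lap
  rw [← this]
  congr 1
  ext x
  simp only [cv, convolution, ContinuousLinearMap.mul_apply']
  rw [← integral_const_mul]
  congr 1
  ext t
  have : Complex.exp (z * x) = Complex.exp (z * t) * Complex.exp (z * (x - t : ℝ)) := by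
    rw [← Complex.exp_add]; congr 1; push_cast; ring
  rw [this]
  ring

lemma Lap_add {φ ψ : ℝ → ℂ} (h1 : CC φ) (h2 : CC ψ) (z : ℂ) :
    Lap (fun x => φ x + ψ x) z = Lap φ z + Lap ψ z := by
  obtain ⟨R1, _, hR1⟩ := h1.bound
  obtain ⟨R2, _, hR2⟩ := h2.bound
  unfold Lap
  rw [← integral_add (Lap_integrable φ h1.int R1 hR1 z) (Lap_integrable ψ h2.int R2 hR2 z)]
  congr 1
  ext t
  ring

lemma NB.mul {a b : ℝ} {F G : ℝ → ℂ} (hF : NB a F) (hG : NB b G) :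
    NB (a + b) (fun x => F x * G x) := by
  obtain ⟨M, hM⟩ := hF
  obtain ⟨N, hN⟩ := hG
  refine ⟨M * N, fun x hx => ?_⟩
  rw [norm_mul, add_mul, Real.exp_add]
  calc _ ≤ (M * Real.exp (a * x)) * (N * Real.exp (b * x)) :=
        mul_le_mul (hM x hx) (hN x hx) (norm_nonneg _) ((norm_nonneg _).trans (hM x hx))
    _ = _ := by ring

lemma NB.mono {a b : ℝ} {F : ℝ → ℂ} (hF : NB a F) (hab : a ≤ b) : NB b F := by
  obtain ⟨M, hM⟩ := hF
  refine ⟨|M|, fun x hx => (hM x hx).trans ?_⟩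
  have := le_abs_self M
  gcongr

lemma NB.sub {a : ℝ} {F G : ℝ → ℂ} (hF : NB a F) (hG : NB a G) :
    NB a (fun x => F x - G x) := by
  obtain ⟨M, hM⟩ := hF
  obtain ⟨N, hN⟩ := hG
  refine ⟨M + N, fun x hx => ?_⟩
  rw [add_mul]
  exact (norm_sub_le _ _).trans (add_le_add (hM x hx) (hN x hx))

lemma NB.of_sq {a : ℝ} {F : ℝ → ℂ} (hF : NB (2 * a) (fun x => F x * F x)) : NB a F := by
  obtain ⟨M, hM⟩ := hF
  refine ⟨Real.sqrt |M|, fun x hx => ?_⟩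
  refine abs_le_of_sq_le_sq' ?_ (by positivity) |>.2
  have h := hM x hx
  simp only at h
  rw [norm_mul] at h
  rw [mul_pow, Real.sq_sqrt (abs_nonneg M), ← Real.exp_nat_mul]
  calc ‖F x‖ ^ 2 = ‖F x‖ * ‖F x‖ := sq _
    _ ≤ _ := h
    _ ≤ |M| * Real.exp (2 * a * x) := by gcongr; exact le_abs_self M
    _ = _ := by push_cast; ring_nf

/-- The core halving step. -/
lemma core_step {φ ψ : ℝ → ℂ} (h1 : CC φ) (h2 : CC ψ) {a b d : ℝ}
    (ha : VR a (cv φ ψ)) (hb1 : VR b (cv (Dm 1 φ) ψ)) (hb2 : VR b (cv φ (Dm 1 ψ)))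
    (hd : VR d (cv (Dm 1 φ) (Dm 1 ψ))) :
    VR (max ((a + b) / 2) ((a + d) / 2)) (cv (Dm 1 φ) ψ) ∧
    VR (max ((a + b) / 2) ((a + d) / 2)) (cv φ (Dm 1 ψ)) := by
  have d1 := h1.Dm 1
  have d2 := h2.Dm 1
  have hD : VR a (Dm 1 (cv φ ψ)) := fun t ht => by simp [Dm, ha t ht]
  have nH := (VR_iff_NB (h1.cv h2)).1 ha
  have nD := (VR_iff_NB ((h1.cv h2).Dm 1)).1 hD
  have nu1 := (VR_iff_NB (d1.cv h2)).1 hb1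
  have nu2 := (VR_iff_NB (h1.cv d2)).1 hb2
  have nd := (VR_iff_NB (d1.cv d2)).1 hd
  rw [VR_iff_NB (d1.cv h2), VR_iff_NB (h1.cv d2)]
  rw [Dm_cv h1 h2] at nD
  simp only [Lap_cv h1 h2, Lap_cv d1 h2, Lap_cv h1 d2, Lap_cv d1 d2,
    Lap_add (d1.cv h2) (h1.cv d2)] at *
  set m := max ((a + b) / 2) ((a + d) / 2) with hm
  have m1 : a + b ≤ 2 * m := by have := le_max_left ((a + b) / 2) ((a + d) / 2); linarith
  have m2 : a + d ≤ 2 * m := by have := le_max_right ((a + b) / 2) ((a + d) / 2); linarith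
  constructor
  · apply NB.of_sq
    have := ((nD.mul nu1).mono m1).sub ((nH.mul nd).mono m2)
    refine (congrArg (NB (2 * m)) ?_).mp this
    ext x
    ring
  · apply NB.of_sq
    have := ((nD.mul nu2).mono m1).sub ((nH.mul nd).mono m2)
    refine (congrArg (NB (2 * m)) ?_).mp this
    ext x
    ring

lemma seq_lemma (s : ℕ → ℝ) (B : ℝ) (hB : ∀ m, s m ≤ B)
    (h : ∀ m, s (m + 1) ≤ s m ∨ 2 * s (m + 1) ≤ s m + s (m + 2)) : ∀ m, s (m + 1) ≤ s m := by
  intro m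
  by_contra hm
  push Not at hm
  have key : ∀ k, s (m + 1) - s m ≤ s (m + k + 1) - s (m + k) := by
    intro k
    induction k with
    | zero => simp
    | succ k ih =>
      rcases h (m + k) with h' | h'
      · linarith
      · have e1 : m + (k + 1) + 1 = m + k + 2 := by ring
        have e2 : m + (k + 1) = m + k + 1 := by ring
        rw [e1, e2]
        linarith
  have key2 : ∀ k : ℕ, s m + k * (s (m + 1) - s m) ≤ s (m + k) := by
    intro k
    induction k with
    | zero => simp
    | succ k ih =>
      have := key k
      rw [← add_assoc]
      push_cast
      linarith
  obtain ⟨k, hk⟩ := exists_nat_gt ((B - s m) / (s (m + 1) - s m))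
  rw [div_lt_iff₀ (by linarith)] at hk
  have := key2 k
  have := hB (m + k)
  linarith

lemma cv_VR_support {φ ψ : ℝ → ℂ} {A B : ℝ} (h1 : VR A φ) (h2 : VR B ψ) :
    VR (A + B) (cv φ ψ) := by
  intro x hx
  unfold cv
  rw [integral_eq_zero_of_ae]
  refine ae_of_all _ fun t => ?_
  by_cases ht : A < t
  · simp [h1 t ht]
  · simp [h2 (x - t) (by linarith)]

lemma VR_Dm {φ : ℝ → ℂ} {A : ℝ} (h : VR A φ) (k : ℕ) : VR A (Dm k φ) := fun t ht => by
  simp [Dm, h t ht]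

lemma Dm_moments {φ ψ : ℝ → ℂ} (h1 : CC φ) (h2 : CC ψ) {c : ℝ} (hc : VR c (cv φ ψ)) (k : ℕ) :
    VR c (cv (Dm k φ) ψ) := by
  obtain ⟨A, hA0, hA⟩ := h1.bound
  obtain ⟨B, hB0, hB⟩ := h2.bound
  have vA : VR A φ := fun t ht => hA t (ht.trans_le (le_abs_self t))
  have vB : VR B ψ := fun t ht => hB t (ht.trans_le (le_abs_self t))
  let S : ℕ → Set ℝ := fun m => {s | c ≤ s ∧ ∀ i j, i + j = m → VR s (cv (Dm i φ) (Dm j ψ))}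
  have hmem : ∀ m, max c (A + B) ∈ S m := fun m => ⟨le_max_left _ _, fun i j _ t ht =>
    cv_VR_support (VR_Dm vA i) (VR_Dm vB j) t ((le_max_right _ _).trans_lt ht)⟩
  have hbdd : ∀ m, BddBelow (S m) := fun m => ⟨c, fun s hs => hs.1⟩
  let s : ℕ → ℝ := fun m => sInf (S m)
  have hcs : ∀ m, c ≤ s m := fun m => le_csInf ⟨_, hmem m⟩ fun _ h => h.1
  have hV : ∀ m i j, i + j = m → VR (s m) (cv (Dm i φ) (Dm j ψ)) := by
    intro m i j hij t ht
    obtain ⟨r, hr, hrt⟩ := exists_lt_of_csInf_lt ⟨_, hmem m⟩ ht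
    exact hr.2 i j hij t hrt
  have hs0 : s 0 = c := by
    refine le_antisymm (csInf_le (hbdd 0) ⟨le_rfl, ?_⟩) (hcs 0)
    intro i j hij
    obtain ⟨rfl, rfl⟩ : i = 0 ∧ j = 0 := by omega
    have e : ∀ χ : ℝ → ℂ, Dm 0 χ = χ := fun χ => by ext; simp [Dm]
    rwa [e, e]
  have hstep : ∀ m, s (m + 1) ≤ s m ∨ 2 * s (m + 1) ≤ s m + s (m + 2) := by
    intro m
    set M := max ((s m + s (m + 1)) / 2) ((s m + s (m + 2)) / 2) with hM
    have h3 : ∀ i j, i + j = m → VR M (cv (Dm (i + 1) φ) (Dm j ψ)) ∧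
        VR M (cv (Dm i φ) (Dm (j + 1) ψ)) := by
      intro i j hij
      have := core_step (a := s m) (b := s (m + 1)) (d := s (m + 2)) (h1.Dm i) (h2.Dm j)
        (hV m i j hij)
        (by rw [Dm_Dm]; exact hV _ _ _ (by omega)) (by rw [Dm_Dm]; exact hV _ _ _ (by omega))
        (by rw [Dm_Dm, Dm_Dm]; exact hV _ _ _ (by omega))
      rwa [Dm_Dm, Dm_Dm] at this
    have h4 : max c M ∈ S (m + 1) := by
      refine ⟨le_max_left _ _, fun i j hij t ht => ?_⟩
      have ht' : M < t := (le_max_right _ _).trans_lt ht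
      rcases i with _ | i
      · rcases j with _ | j
        · omega
        · exact (h3 0 j (by omega)).2 t ht'
      · exact (h3 i j (by omega)).1 t ht'
    have h5 : s (m + 1) ≤ max c M := csInf_le (hbdd _) h4
    rcases le_max_iff.1 h5 with h | h
    · left; exact h.trans (hcs m)
    · rcases le_max_iff.1 h with h | h
      · left; linarith
      · right; linarith
  have hanti := seq_lemma s (max c (A + B)) (fun m => csInf_le (hbdd m) (hmem m)) hstep
  have hle : s k ≤ c := by
    rw [← hs0]
    exact antitone_nat_of_succ_le hanti (Nat.zero_le k)
  intro t ht
  have := hV k k 0 (by omega) t (hle.trans_lt ht)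
  have e : Dm 0 ψ = ψ := by ext; simp [Dm]
  rwa [e] at this

lemma real_moments_zero {u : ℝ → ℝ} (hu : Continuous u) (hs : HasCompactSupport u)
    (h : ∀ k : ℕ, ∫ t, t ^ k * u t = 0) : u = 0 := by
  obtain ⟨R, hR⟩ := hs.isCompact.isBounded.exists_norm_le
  have hR' : ∀ t, t ∉ Icc (-R) R → u t = 0 := by
    intro t ht
    by_contra h0
    have := hR t (subset_tsupport _ h0)
    rw [Real.norm_eq_abs, abs_le] at this
    exact ht this
  have hui : Integrable u := hu.integrable_of_hasCompactSupport hs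
  have hki : ∀ k : ℕ, Integrable (fun t => t ^ k * u t) := fun k =>
    Continuous.integrable_of_hasCompactSupport (by fun_prop) hs.mul_left
  have hpi : ∀ p : Polynomial ℝ, Integrable (fun t => p.eval t * u t) := fun p =>
    Continuous.integrable_of_hasCompactSupport (by fun_prop) hs.mul_left
  have huu : Integrable (fun t => u t * u t) :=
    Continuous.integrable_of_hasCompactSupport (by fun_prop) hs.mul_left
  have hp : ∀ p : Polynomial ℝ, ∫ t, p.eval t * u t = 0 := by
    intro p
    simp_rw [Polynomial.eval_eq_sum_range, Finset.sum_mul, mul_assoc]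
    rw [integral_finsetSum _ fun k _ => (hki k).const_mul _]
    refine Finset.sum_eq_zero fun k _ => ?_
    rw [integral_const_mul, h k, mul_zero]
  have hle : ∀ ε > 0, ∫ t, u t * u t ≤ ε * ∫ t, |u t| := by
    intro ε hε
    obtain ⟨p, hp'⟩ := exists_polynomial_near_of_continuousOn (-R) R u hu.continuousOn ε hε
    have : ∫ t, u t * u t = ∫ t, (u t * u t - p.eval t * u t) := by
      rw [integral_sub huu (hpi p), hp p, sub_zero]
    rw [this, ← integral_const_mul]
    refine integral_mono (huu.sub (hpi p)) (hui.abs.const_mul _) fun t => ?_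
    simp only
    by_cases ht : t ∈ Icc (-R) R
    · have := (hp' t ht).le
      calc u t * u t - p.eval t * u t ≤ |(u t - p.eval t) * u t| := by
            rw [← sub_mul]; exact le_abs_self _
        _ = |p.eval t - u t| * |u t| := by rw [abs_mul, abs_sub_comm]
        _ ≤ ε * |u t| := by gcongr
    · simp [hR' t ht]
  have hz : ∫ t, u t * u t = 0 := by
    refine le_antisymm ?_ (integral_nonneg fun t => mul_self_nonneg _)
    have hI : 0 ≤ ∫ t, |u t| := integral_nonneg fun _ => abs_nonneg _
    refine le_of_forall_pos_le_add fun ε hε => ?_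
    refine (hle (ε / ((∫ t, |u t|) + 1)) (by positivity)).trans ?_
    rw [zero_add, div_mul_eq_mul_div, div_le_iff₀ (by positivity)]
    nlinarith
  ext t
  by_contra h0
  have := Continuous.integral_pos_of_hasCompactSupport_nonneg_nonzero (f := fun t => u t * u t)
    (μ := volume) (x := t) (by fun_prop) hs.mul_left (fun t => mul_self_nonneg _)
    (by simpa using h0)
  linarith

lemma moments_zero {u : ℝ → ℂ} (hu : CC u) (h : ∀ k : ℕ, ∫ t : ℝ, (t : ℂ) ^ k * u t = 0) :
    u = 0 := by
  have hc := hu.1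
  have hki : ∀ k : ℕ, Integrable (fun t : ℝ => (t : ℂ) ^ k * u t) := fun k => (hu.Dm k).int
  have hre : (fun t => (u t).re) = 0 := by
    refine real_moments_zero (by fun_prop) (hu.2.comp_left (g := Complex.re) rfl) fun k => ?_
    have := integral_re (hki k)
    simp only [RCLike.re_eq_complex_re, h k] at this
    rw [Complex.zero_re] at this
    rw [← this]
    congr 1
    ext t
    rw [← Complex.ofReal_pow, Complex.re_ofReal_mul]
  have him : (fun t => (u t).im) = 0 := by
    refine real_moments_zero (by fun_prop) (hu.2.comp_left (g := Complex.im) rfl) fun k => ?_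
    have := integral_im (hki k)
    simp only [RCLike.im_eq_complex_im, h k] at this
    rw [Complex.zero_im] at this
    rw [← this]
    congr 1
    ext t
    rw [← Complex.ofReal_pow, Complex.im_ofReal_mul]
  ext t
  exact Complex.ext (congrFun hre t) (congrFun him t)

/-- Titchmarsh convolution theorem on the line (right ends of the supports). -/
theorem titchmarsh_line {φ ψ : ℝ → ℂ} (h1 : CC φ) (h2 : CC ψ) {c : ℝ} (hc : VR c (cv φ ψ))
    (x y : ℝ) (hxy : c < x + y) : φ x * ψ y = 0 := by
  have c1 := h1.1
  have c2 := h2.1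
  have hu : CC (fun t => φ t * ψ (x + y - t)) := ⟨by fun_prop, h1.2.mul_right⟩
  have := moments_zero hu (fun k => by
    have := Dm_moments h1 h2 hc k (x + y) hxy
    simpa [cv, Dm, mul_assoc] using this)
  simpa using congrFun this x

lemma proj_add (x y : ℝ) : proj (x + y) = proj x + proj y := AddCircle.coe_add _ _ _

lemma proj_sub (x y : ℝ) : proj (x - y) = proj x - proj y := AddCircle.coe_sub _ _ _

lemma proj_continuous : Continuous proj := AddCircle.continuous_mk' _

lemma proj_eq_iff (x y : ℝ) : proj x = proj y ↔ ∃ m : ℤ, x = y + m * (2 * π) := by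
  rw [← sub_eq_zero, ← proj_sub]
  unfold proj
  rw [AddCircle.coe_eq_zero_iff]
  constructor
  · rintro ⟨m, hm⟩
    refine ⟨m, ?_⟩
    rw [zsmul_eq_mul] at hm
    linarith
  · rintro ⟨m, hm⟩
    refine ⟨m, ?_⟩
    rw [zsmul_eq_mul]
    linarith

lemma mem_Rn {n : ℕ} (hn : 0 < n) (A : Set ℝ) (y : ℝ) :
    proj y ∈ Rn n (proj '' A) ↔ ∃ m : ℤ, ∃ r ∈ A, y = r + m * (2 * π / n) := by
  have hn' : (n : ℝ) ≠ 0 := by positivity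
  unfold Rn
  simp only [mem_iUnion, Finset.mem_range, mem_vadd_set, vadd_eq_add, exists_prop]
  constructor
  · rintro ⟨k, hk, _, ⟨r, hr, rfl⟩, h⟩
    rw [← proj_add, eq_comm, proj_eq_iff] at h
    obtain ⟨m, hm⟩ := h
    refine ⟨k + m * n, r, hr, ?_⟩
    rw [hm]
    push_cast
    field_simp
    ring
  · rintro ⟨m, r, hr, rfl⟩
    have hnz : (n : ℤ) ≠ 0 := by exact_mod_cast hn.ne'
    have hk0 : 0 ≤ m % n := Int.emod_nonneg m hnz
    have hkn : m % n < n := Int.emod_lt_of_pos m (by exact_mod_cast hn)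
    obtain ⟨k, hk⟩ := Int.eq_ofNat_of_zero_le hk0
    refine ⟨k, by omega, proj r, ⟨r, hr, rfl⟩, ?_⟩
    rw [← proj_add, eq_comm, proj_eq_iff]
    refine ⟨m / n, ?_⟩
    have h1 : (m : ℝ) = (n : ℝ) * ((m / n : ℤ) : ℝ) + k := by
      have := Int.mul_ediv_add_emod m n
      rw [hk] at this
      exact_mod_cast this.symm
    rw [h1]
    field_simp
    ring

lemma Rn_isClosed (n : ℕ) (a b : ℝ) : IsClosed (Rn n (proj '' Icc a b)) := by
  unfold Rn
  refine Set.Finite.isClosed_biUnion (Finset.finite_toSet _) fun k _ => ?_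
  exact ((isCompact_Icc.image proj_continuous).isClosed).vadd _

/-- The isotypic components. -/
def FA (n : ℕ) (α : ℂ) (f : 𝕋 → ℂ) : 𝕋 → ℂ := fun x =>
  ∑ k : Fin n, α ^ (k : ℕ) * shift (proj (2 * π * k / n)) f x

lemma FA_range (n : ℕ) (α : ℂ) (f : 𝕋 → ℂ) (x : 𝕋) :
    FA n α f x = ∑ k ∈ Finset.range n, α ^ k * f (x - proj (k * (2 * π / n))) := by
  unfold FA
  rw [← Fin.sum_univ_eq_sum_range (fun k => α ^ k * f (x - proj (k * (2 * π / n))))]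
  refine Finset.sum_congr rfl fun k _ => ?_
  unfold shift
  congr 4
  ring

lemma FA_continuous (n : ℕ) (α : ℂ) {f : 𝕋 → ℂ} (hf : Continuous f) : Continuous (FA n α f) := by
  unfold FA shift
  fun_prop

lemma FA_quasi {n : ℕ} (hn : 0 < n) {α : ℂ} (hα : α ^ n = 1) (f : 𝕋 → ℂ) (x : 𝕋) :
    FA n α f (x + proj (2 * π / n)) = α * FA n α f x := by
  have hn' : (n : ℝ) ≠ 0 := by positivity
  rw [FA_range, FA_range]
  set d : ℕ → ℂ := fun k => α ^ k * f (x + proj (2 * π / n) - proj (k * (2 * π / n))) with hd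
  have h1 := Finset.sum_range_succ d n
  have h2 := Finset.sum_range_succ' d n
  have h0 : d n = d 0 := by
    simp only [hd, hα]
    have : proj (n * (2 * π / n)) = proj ((0 : ℕ) * (2 * π / n)) := by
      rw [proj_eq_iff]
      refine ⟨1, ?_⟩
      push_cast
      field_simp
      ring
    rw [this]
    simp
  have h3 : ∑ k ∈ Finset.range n, d k = ∑ k ∈ Finset.range n, d (k + 1) := by
    rw [h1, h0] at h2
    exact add_right_cancel h2
  change ∑ k ∈ Finset.range n, d k = _
  rw [h3, Finset.mul_sum]
  refine Finset.sum_congr rfl fun k _ => ?_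
  simp only [hd]
  have : x + proj (2 * π / n) - proj ((k + 1 : ℕ) * (2 * π / n)) =
      x - proj (k * (2 * π / n)) := by
    have : ((k + 1 : ℕ) : ℝ) * (2 * π / n) = k * (2 * π / n) + 2 * π / n := by push_cast; ring
    rw [this, proj_add]
    abel
  rw [this]
  ring

lemma van {n : ℕ} (hn : 0 < n) {f : 𝕋 → ℂ} {a b : ℝ} (hs : tsupport f ⊆ Rn n (proj '' Icc a b))
    (j : ℤ) {x : ℝ} (h1 : b + j * (2 * π / n) < x) (h2 : x < a + (j + 1) * (2 * π / n))
    (k : ℤ) : f (proj (x - k * (2 * π / n))) = 0 := by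
  by_contra h0
  have hm := hs (subset_tsupport f h0)
  rw [mem_Rn hn] at hm
  obtain ⟨m, r, ⟨hr1, hr2⟩, hm⟩ := hm
  have hp : 0 < 2 * π / n := by positivity
  have e : x = r + (m + k : ℤ) * (2 * π / n) := by push_cast; linarith
  rcases le_or_gt (m + k) j with h | h
  · have : ((m + k : ℤ) : ℝ) * (2 * π / n) ≤ j * (2 * π / n) := by gcongr
    linarith
  · have : ((j + 1 : ℤ) : ℝ) * (2 * π / n) ≤ (m + k : ℤ) * (2 * π / n) :=
      mul_le_mul_of_nonneg_right (by exact_mod_cast Int.add_one_le_of_lt h) hp.le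
    push_cast at this e
    linarith

lemma FA_van {n : ℕ} (hn : 0 < n) {f : 𝕋 → ℂ} {a b : ℝ}
    (hs : tsupport f ⊆ Rn n (proj '' Icc a b)) (α : ℂ)
    (j : ℤ) {x : ℝ} (h1 : b + j * (2 * π / n) < x) (h2 : x < a + (j + 1) * (2 * π / n)) :
    FA n α f (proj x) = 0 := by
  rw [FA_range]
  refine Finset.sum_eq_zero fun k _ => ?_
  have := van hn hs j h1 h2 k
  rw [Int.cast_natCast, proj_sub] at this
  rw [this, mul_zero]

lemma FA_mem {n : ℕ} (hn : 0 < n) {f : 𝕋 → ℂ} {a b : ℝ}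
    (hs : tsupport f ⊆ Rn n (proj '' Icc a b)) (α : ℂ)
    {x : ℝ} (h1 : b - (2 * π / n) < x) (h2 : x < a + (2 * π / n)) (h : FA n α f (proj x) ≠ 0) :
    x ∈ Icc a b := by
  constructor
  · by_contra hx
    exact h (FA_van hn hs α (-1) (by push_cast; linarith) (by push_cast; linarith))
  · by_contra hx
    exact h (FA_van hn hs α 0 (by push_cast; linarith) (by push_cast; linarith))

/-- The fundamental piece of `FA`, lifted to the line. -/
def piece (n : ℕ) (α : ℂ) (f : 𝕋 → ℂ) (a b : ℝ) : ℝ → ℂ :=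
  (Icc a b).indicator (fun x => FA n α f (proj x))

lemma piece_eq {n : ℕ} (hn : 0 < n) {f : 𝕋 → ℂ} {a b : ℝ}
    (hs : tsupport f ⊆ Rn n (proj '' Icc a b)) (α : ℂ)
    {x : ℝ} (h1 : b - (2 * π / n) < x) (h2 : x < a + (2 * π / n)) :
    piece n α f a b x = FA n α f (proj x) := by
  unfold piece
  by_cases hx : x ∈ Icc a b
  · rw [indicator_of_mem hx]
  · rw [indicator_of_notMem hx]
    by_contra h
    exact hx (FA_mem hn hs α h1 h2 (Ne.symm h))

lemma piece_CC {n : ℕ} (hn : 0 < n) {f : 𝕋 → ℂ} (hf : Continuous f) {a b : ℝ} (hab : a ≤ b)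
    (hlen : b - a < 2 * π / n)
    (hs : tsupport f ⊆ Rn n (proj '' Icc a b)) (α : ℂ) : CC (piece n α f a b) := by
  have hc : Continuous fun x => FA n α f (proj x) := (FA_continuous n α hf).comp proj_continuous
  constructor
  · unfold piece
    refine continuous_indicator ?_ hc.continuousOn
    intro x hx
    rw [frontier_Icc hab] at hx
    have hcl : IsClosed {x | FA n α f (proj x) = 0} := isClosed_eq hc continuous_const
    rcases hx with rfl | rfl
    · have h1 : Ioo (b - 2 * π / n) x ⊆ {x | FA n α f (proj x) = 0} := fun y hy => by
        by_contra h
        exact absurd (FA_mem hn hs α hy.1 (by linarith [hy.2]) h).1 (not_le.2 hy.2)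
      have h2 := closure_minimal h1 hcl
      rw [closure_Ioo (by linarith)] at h2
      exact h2 ⟨by linarith, le_rfl⟩
    · have h1 : Ioo x (a + 2 * π / n) ⊆ {x | FA n α f (proj x) = 0} := fun y hy => by
        by_contra h
        exact absurd (FA_mem hn hs α (by linarith [hy.1]) hy.2 h).2 (not_le.2 hy.1)
      have h2 := closure_minimal h1 hcl
      rw [closure_Ioo (by linarith)] at h2
      exact h2 ⟨le_rfl, by linarith⟩
  · exact HasCompactSupport.intro isCompact_Icc fun x hx => indicator_of_notMem hx _

lemma conv_FA {n : ℕ} (α : ℂ) {f g : 𝕋 → ℂ} (hf : Continuous f)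
    (hg : Continuous g) (x : ℝ)
    (h : ∀ k : ℤ, circConv f g (proj (x - k * (2 * π / n))) = 0) :
    ∫ t : 𝕋, FA n α f t * FA n α g (proj x - t) = 0 := by
  simp_rw [FA_range, Finset.sum_mul_sum]
  have hi : ∀ F : 𝕋 → ℂ, Continuous F → Integrable F := fun F hF =>
    hF.integrable_of_hasCompactSupport (HasCompactSupport.of_compactSpace F)
  rw [integral_finsetSum _ fun i _ => hi _ (by fun_prop)]
  refine Finset.sum_eq_zero fun i _ => ?_
  rw [integral_finsetSum _ fun i _ => hi _ (by fun_prop)]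
  refine Finset.sum_eq_zero fun j _ => ?_
  have h1 := h (i + j)
  unfold circConv at h1
  rw [← integral_sub_right_eq_self _ (proj (i * (2 * π / n)))] at h1
  have : ∀ t : 𝕋, α ^ i * f (t - proj (i * (2 * π / n))) *
      (α ^ j * g (proj x - t - proj (j * (2 * π / n)))) = α ^ i * α ^ j *
      (f (t - proj (i * (2 * π / n))) * g (proj (x - (i + j : ℤ) * (2 * π / n)) -
        (t - proj (i * (2 * π / n))))) := by
    intro t
    have : proj (x - (i + j : ℤ) * (2 * π / n)) - (t - proj (i * (2 * π / n))) =
        proj x - t - proj (j * (2 * π / n)) := by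
      have : x - (i + j : ℤ) * (2 * π / n) = x - (i * (2 * π / n) + j * (2 * π / n)) := by
        push_cast; ring
      rw [this, proj_sub, proj_add]
      abel
    rw [this]
    ring
  simp_rw [this]
  rw [integral_const_mul, h1, mul_zero]

lemma pieces_VR {n : ℕ} (hn : 0 < n) {α : ℂ} (hα : α ^ n = 1) {f g : 𝕋 → ℂ}
    (hf : Continuous f) (hg : Continuous g)
    {aI bI aJ bJ : ℝ} (hI : aI ≤ bI) (hJ : aJ ≤ bJ)
    (hlen : (bI - aI) + (bJ - aJ) < 2 * π / n)
    (hsf : tsupport f ⊆ Rn n (proj '' Icc aI bI))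
    (hsg : tsupport g ⊆ Rn n (proj '' Icc aJ bJ))
    {aK bK : ℝ} (haK : aI + aJ ≤ aK) (hKab : aK ≤ bK)
    (hsfg : tsupport (circConv f g) ⊆ Rn n (proj '' Icc aK bK)) :
    VR bK (cv (piece n α f aI bI) (piece n α g aJ bJ)) := by
  intro x hx
  have hn' : (n : ℝ) ≠ 0 := by positivity
  set p := 2 * π / n with hp
  have hp0 : 0 < p := by positivity
  by_cases hx2 : bI + bJ < x
  · refine cv_VR_support (A := bI) (B := bJ) ?_ ?_ x hx2 <;>
    · intro t ht
      unfold piece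
      rw [indicator_of_notMem (fun h => absurd h.2 (not_le.2 ht))]
  push Not at hx2
  have hF := FA_continuous n α hf
  have hG := FA_continuous n α hg
  have hpc := proj_continuous
  set W : ℝ → ℂ := fun t => FA n α f (proj t) * FA n α g (proj x - proj t) with hW
  have hWc : Continuous W := by fun_prop
  have hα0 : α ≠ 0 := by
    rintro rfl
    rw [zero_pow hn.ne'] at hα
    exact zero_ne_one hα
  have hWp : Function.Periodic W p := by
    intro t
    simp only [hW]
    rw [proj_add, FA_quasi hn hα]
    have : FA n α g (proj x - proj t) = α * FA n α g (proj x - (proj t + proj p)) := by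
      rw [← FA_quasi hn hα]
      congr 1
      abel
    rw [this]
    ring
  have hpt : ∀ t, piece n α f aI bI t * piece n α g aJ bJ (x - t) = (Icc aI bI).indicator W t := by
    intro t
    by_cases ht : t ∈ Icc aI bI
    · rw [indicator_of_mem ht, piece, indicator_of_mem ht,
        piece_eq hn hsg α (by linarith [ht.2]) (by linarith [ht.1]), proj_sub]
    · rw [indicator_of_notMem ht, piece, indicator_of_notMem ht, zero_mul]
  unfold cv
  simp_rw [hpt]
  rw [integral_indicator measurableSet_Icc, integral_Icc_eq_integral_Ioc,
    ← intervalIntegral.integral_of_le hI]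
  have h2 : ∫ t in bI..(aI + p), W t = 0 := by
    rw [intervalIntegral.integral_of_le (by linarith), integral_Ioc_eq_integral_Ioo]
    refine setIntegral_eq_zero_of_forall_eq_zero fun t ht => ?_
    simp only [hW]
    rw [FA_van hn hsf α 0 (by push_cast; linarith [ht.1]) (by push_cast; linarith [ht.2]),
      zero_mul]
  have h3 : ∫ t in aI..bI, W t = ∫ t in aI..(aI + p), W t := by
    rw [← intervalIntegral.integral_add_adjacent_intervals (hWc.intervalIntegrable aI bI)
      (hWc.intervalIntegrable bI (aI + p)), h2, add_zero]
  have h4 := hWp.intervalIntegral_add_zsmul_eq n aI (fun _ _ => hWc.intervalIntegrable _ _)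
  have h5 : aI + (n : ℤ) • p = aI + 2 * π := by
    rw [zsmul_eq_mul, hp]; push_cast; field_simp
  rw [h5] at h4
  have h6 : ∫ t in aI..(aI + 2 * π), W t = 0 := by
    have := AddCircle.intervalIntegral_preimage (2 * π) aI
      (fun t => FA n α f t * FA n α g (proj x - t))
    refine this.trans ?_
    refine conv_FA α hf hg x fun k => ?_
    exact van hn hsfg 0 (by push_cast; linarith) (by push_cast; linarith) k
  rw [h6] at h4
  rw [h3]
  simpa [hn.ne'] using h4.symm

lemma exists_root {n : ℕ} (hn : 0 < n) {f : 𝕋 → ℂ} {a b : ℝ}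
    (hs : tsupport f ⊆ Rn n (proj '' Icc a b))
    (hmin : ∀ a' b' : ℝ, a ≤ a' → b' ≤ b → (a', b') ≠ (a, b) →
      ¬ tsupport f ⊆ Rn n (proj '' Icc a' b')) :
    ∃ β : ℂ, β ^ n = 1 ∧ proj b ∈ tsupport (FA n β f) := by
  by_contra hcon
  push Not at hcon
  have hζ := Complex.isPrimitiveRoot_exp n hn.ne'
  set ζ := Complex.exp (2 * π * Complex.I / n) with hζd
  have hroot : ∀ l : Fin n, (ζ ^ (l : ℕ)) ^ n = 1 := fun l => by
    rw [← pow_mul, mul_comm, pow_mul, hζ.pow_eq_one, one_pow]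
  have hev : ∀ᶠ x in nhds b, ∀ l : Fin n, FA n (ζ ^ (l : ℕ)) f (proj x) = 0 := by
    rw [Filter.eventually_all]
    intro l
    have h1 := hcon _ (hroot l)
    rw [notMem_tsupport_iff_eventuallyEq] at h1
    exact proj_continuous.continuousAt.eventually h1
  obtain ⟨ε, hε, hball⟩ := Metric.eventually_nhds_iff.1 hev
  have hn' : (n : ℝ) ≠ 0 := by positivity
  have hz : ∀ x, dist x b < ε → ∀ k : Fin n, f (proj x - proj ((k : ℕ) * (2 * π / n))) = 0 := by
    intro x hx k
    have h1 := hball hx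
    have h2 := Matrix.eq_zero_of_forall_index_sum_pow_mul_eq_zero (n := n)
      (f := fun l : Fin n => ζ ^ (l : ℕ))
      (v := fun k : Fin n => f (proj x - proj ((k : ℕ) * (2 * π / n))))
      (fun i j hij => Fin.ext (hζ.pow_inj i.2 j.2 hij))
      (fun l => by
        have := h1 l
        rw [FA_range, ← Fin.sum_univ_eq_sum_range
          (fun k => (ζ ^ (l : ℕ)) ^ k * f (proj x - proj (k * (2 * π / n))))] at this
        exact this)
    exact congrFun h2 k
  refine hmin a (b - ε / 2) le_rfl (by linarith) (by simp [hε.ne']) ?_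
  refine closure_minimal ?_ (Rn_isClosed n _ _)
  intro y hy
  obtain ⟨y, rfl⟩ := QuotientAddGroup.mk_surjective y
  change proj y ∈ _
  have hy0 : f (proj y) ≠ 0 := hy
  have hm := hs (subset_tsupport f hy)
  change proj y ∈ _ at hm
  rw [mem_Rn hn] at hm ⊢
  obtain ⟨m, r, ⟨hr1, hr2⟩, rfl⟩ := hm
  refine ⟨m, r, ⟨hr1, ?_⟩, rfl⟩
  by_contra hr
  push Not at hr
  have hnz : (n : ℤ) ≠ 0 := by exact_mod_cast hn.ne'
  have hk0 : 0 ≤ (-m) % n := Int.emod_nonneg _ hnz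
  have hkn : (-m) % n < n := Int.emod_lt_of_pos _ (by exact_mod_cast hn)
  obtain ⟨k, hk⟩ := Int.eq_ofNat_of_zero_le hk0
  refine hy0 ?_
  have h1 := hz r (by rw [Real.dist_eq, abs_lt]; constructor <;> linarith) ⟨k, by omega⟩
  rw [← proj_sub] at h1
  rw [← h1]
  congr 1
  rw [proj_eq_iff]
  refine ⟨-((-m) / n), ?_⟩
  have h2 : (-m : ℝ) = (n : ℝ) * (((-m) / n : ℤ) : ℝ) + k := by
    have := Int.mul_ediv_add_emod (-m) n
    rw [hk] at this
    exact_mod_cast this.symm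
  have h3 : (m : ℝ) = -((n : ℝ) * (((-m) / n : ℤ) : ℝ) + k) := by linarith
  rw [h3]
  push_cast
  field_simp
  ring

lemma side {n : ℕ} (hn : 0 < n) {α : ℂ} {f g : 𝕋 → ℂ}
    {aI bI aJ bJ c : ℝ} (hI : aI ≤ bI) (hJ : aJ ≤ bJ)
    (hlen : (bI - aI) + (bJ - aJ) < 2 * π / n)
    (hsf : tsupport f ⊆ Rn n (proj '' Icc aI bI))
    (hsg : tsupport g ⊆ Rn n (proj '' Icc aJ bJ))
    (hc : aI + aJ ≤ c)
    (hprod : ∀ x y, c < x + y → piece n α f aI bI x * piece n α g aJ bJ y = 0)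
    (hb : proj bI ∈ tsupport (FA n α f)) :
    ∀ y, c - bI < y → y < aJ + 2 * π / n → FA n α g (proj y) = 0 := by
  intro y hy1 hy2
  by_contra hne
  have hyg : piece n α g aJ bJ y ≠ 0 := by
    rwa [piece_eq hn hsg α (by linarith) hy2]
  set U : Set ℝ := Ioo (max (c - y) (bI - 2 * π / n)) (aI + 2 * π / n) with hU
  have hp0 : 0 < 2 * π / n := by positivity
  have hbU : bI ∈ U := ⟨max_lt (by linarith) (by linarith), by linarith⟩
  have hUo : IsOpen (proj '' U) := QuotientAddGroup.isOpenMap_coe U isOpen_Ioo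
  obtain ⟨_, ⟨x, hx, rfl⟩, hxF⟩ := mem_closure_iff.1 hb _ hUo ⟨bI, hbU, rfl⟩
  have hx1 := max_lt_iff.1 hx.1
  have hxf : piece n α f aI bI x ≠ 0 := by
    rw [piece_eq hn hsf α hx1.2 hx.2]
    exact hxF
  exact mul_ne_zero hxf hyg (hprod x y (by linarith [hx1.1]))

/-- Titchmarsh theorem for distributions on a circle: reflected (supremum) version. -/
theorem titchmarsh_circle_sup (n : ℕ) (hn : 2 ≤ n)
    (f g : 𝕋 → ℂ) (hf : Continuous f) (hg : Continuous g)
    (aI bI aJ bJ : ℝ) (hI : aI ≤ bI) (hJ : aJ ≤ bJ)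
    (hlen : (bI - aI) + (bJ - aJ) < 2 * π / n)
    (hsf : tsupport f ⊆ Rn n (proj '' Icc aI bI))
    (hminf : ∀ a' b' : ℝ, aI ≤ a' → b' ≤ bI → (a', b') ≠ (aI, bI) →
      ¬ tsupport f ⊆ Rn n (proj '' Icc a' b'))
    (hsg : tsupport g ⊆ Rn n (proj '' Icc aJ bJ))
    (hming : ∀ a' b' : ℝ, aJ ≤ a' → b' ≤ bJ → (a', b') ≠ (aJ, bJ) →
      ¬ tsupport g ⊆ Rn n (proj '' Icc a' b'))
    (aK bK : ℝ) (haK : aI + aJ ≤ aK) (hKab : aK ≤ bK) (hbK : bK ≤ bI + bJ)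
    (hsfg : tsupport (circConv f g) ⊆ Rn n (proj '' Icc aK bK))
    (hrho : 0 < bI + bJ - bK) :
    ∃ α β : ℂ, α ^ n = 1 ∧ β ^ n = 1 ∧ α ≠ β ∧
      (∀ x ∈ proj '' Ioo (bI - (bI + bJ - bK)) (aI + 2 * π / n),
        ∑ k : Fin n, α ^ (k : ℕ) * shift (proj (2 * π * k / n)) f x = 0) ∧
      ((∀ x ∈ proj '' Ioo bJ (aJ + 2 * π / n),
        ∑ k : Fin n, α ^ (k : ℕ) * shift (proj (2 * π * k / n)) g x = 0) ∧
        proj bJ ∈ tsupport (fun x =>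
          ∑ k : Fin n, α ^ (k : ℕ) * shift (proj (2 * π * k / n)) g x)) ∧
      ((∀ x ∈ proj '' Ioo bI (aI + 2 * π / n),
        ∑ k : Fin n, β ^ (k : ℕ) * shift (proj (2 * π * k / n)) f x = 0) ∧
        proj bI ∈ tsupport (fun x =>
          ∑ k : Fin n, β ^ (k : ℕ) * shift (proj (2 * π * k / n)) f x)) ∧
      (∀ x ∈ proj '' Ioo (bJ - (bI + bJ - bK)) (aJ + 2 * π / n),
        ∑ k : Fin n, β ^ (k : ℕ) * shift (proj (2 * π * k / n)) g x = 0) := by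
  have hn0 : 0 < n := by omega
  have hp0 : 0 < 2 * π / n := by positivity
  have hprod : ∀ γ : ℂ, γ ^ n = 1 → ∀ x y, bK < x + y →
      piece n γ f aI bI x * piece n γ g aJ bJ y = 0 := fun γ hγ =>
    titchmarsh_line (piece_CC hn0 hf hI (by linarith) hsf γ)
      (piece_CC hn0 hg hJ (by linarith) hsg γ)
      (pieces_VR hn0 hγ hf hg hI hJ hlen hsf hsg haK hKab hsfg)
  obtain ⟨β, hβ, hbβ⟩ := exists_root hn0 hsf hminf
  obtain ⟨α, hα, hbα⟩ := exists_root hn0 hsg hming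
  have hGβ := side hn0 hI hJ hlen hsf hsg (haK.trans hKab) (hprod β hβ) hbβ
  have hFα := side hn0 hJ hI (by linarith) hsg hsf (by linarith)
    (fun x y hxy => by rw [mul_comm]; exact hprod α hα y x (by linarith)) hbα
  refine ⟨α, β, hα, hβ, ?_, ?_, ⟨?_, hbα⟩, ⟨?_, hbβ⟩, ?_⟩
  · rintro rfl
    have hU : IsOpen (proj '' Ioo (bK - bI) (aJ + 2 * π / n)) :=
      QuotientAddGroup.isOpenMap_coe _ isOpen_Ioo
    obtain ⟨_, ⟨x, hx, rfl⟩, hxG⟩ := mem_closure_iff.1 hbα _ hU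
      ⟨bJ, ⟨by linarith, by linarith⟩, rfl⟩
    exact hxG (hGβ x hx.1 hx.2)
  · rintro _ ⟨x, hx, rfl⟩
    exact hFα x (by linarith [hx.1]) hx.2
  · rintro _ ⟨x, hx, rfl⟩
    exact FA_van hn0 hsg α 0 (by push_cast; linarith [hx.1]) (by push_cast; linarith [hx.2])
  · rintro _ ⟨x, hx, rfl⟩
    exact FA_van hn0 hsf β 0 (by push_cast; linarith [hx.1]) (by push_cast; linarith [hx.2])
  · rintro _ ⟨x, hx, rfl⟩
    exact hGβ x (by linarith [hx.1]) hx.2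

end
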